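/- ∫₀¹ x²·log²(sin(πx)) dx = 13π²/360 + (1/3)·log²2 + (1/π²)·(log 2)·ζ(3). -/

import Mathlib

open Real

/-- Summing over `ℕ × ℕ` along antidiagonals. -/
theorem HasSum.sum_range_antidiagonal {F : ℕ × ℕ → ℝ} {a : ℝ} (h : HasSum F a) :
    HasSum (fun n : ℕ => ∑ k ∈ Finset.range (n + 1), F (k, n - k)) a := by
  have h1 := (Finset.HasAntidiagonal.sigmaAntidiagonalEquivProd (A := ℕ)).hasSum_iff.mpr h
  have h2 := h1.sigma (fun n => hasSum_fintype _)
  convert h2 using 2 with n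
  rw [← Finset.Nat.sum_antidiagonal_eq_sum_range_succ_mk, ← Finset.sum_coe_sort]
  rfl

theorem HasSum.mul_of_nonneg {f g : ℕ → ℝ} {a b : ℝ} (hf : HasSum f a) (hg : HasSum g b)
    (hf' : ∀ n, 0 ≤ f n) (hg' : ∀ n, 0 ≤ g n) :
    HasSum (fun x : ℕ × ℕ => f x.1 * g x.2) (a * b) :=
  hf.mul hg (hf.summable.mul_of_nonneg hg.summable hf' hg')

theorem hasSum_one_div_succ_sq : HasSum (fun n : ℕ => 1 / ((n : ℝ) + 1) ^ 2) (π ^ 2 / 6) := by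
  simpa using (hasSum_nat_add_iff' 1).mpr hasSum_zeta_two

theorem hasSum_one_div_succ_pow_four :
    HasSum (fun n : ℕ => 1 / ((n : ℝ) + 1) ^ 4) (π ^ 4 / 90) := by
  simpa using (hasSum_nat_add_iff' 1).mpr hasSum_zeta_four

/-- If `∑ p n` converges then so does `∑ (2 (∑_{k<n} p k) p n + (p n)²)`, to the square. -/
theorem HasSum.two_mul_sum_range_mul_add_sq {p : ℕ → ℝ} {a : ℝ} (hp : ∀ n, 0 ≤ p n)
    (h : HasSum p a) :
    HasSum (fun n : ℕ => 2 * (∑ k ∈ Finset.range n, p k) * p n + p n ^ 2) (a ^ 2) := by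
  rw [hasSum_iff_tendsto_nat_of_nonneg]
  · refine (h.tendsto_sum_nat.pow 2).congr fun n => ?_
    induction n with
    | zero => simp
    | succ n ih => rw [Finset.sum_range_succ, Finset.sum_range_succ, ← ih]; ring
  · intro n
    have := Finset.sum_nonneg fun k (_ : k ∈ Finset.range n) => hp k
    have := hp n
    positivity

/-- The double zeta value `ζ(2, 2) = π⁴ / 120`. -/
theorem hasSum_sum_one_div_sq_mul_one_div_sq :
    HasSum (fun n : ℕ => (∑ k ∈ Finset.range n, 1 / ((k : ℝ) + 1) ^ 2) * (1 / ((n : ℝ) + 1) ^ 2))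
      (π ^ 4 / 120) := by
  have h := (hasSum_one_div_succ_sq.two_mul_sum_range_mul_add_sq fun n => by positivity).sub
    hasSum_one_div_succ_pow_four
  have hval : π ^ 4 / 120 = 1 / 2 * ((π ^ 2 / 6) ^ 2 - π ^ 4 / 90) := by ring
  rw [hval]
  refine (h.mul_left (1 / 2)).congr_fun fun n => ?_
  rw [one_div_pow, ← pow_mul]
  ring

theorem HasSum.sum_range_mul {a b : ℕ → ℝ} {s : ℝ}
    (h : HasSum (fun x : ℕ × ℕ => a x.1 * b (x.1 + x.2 + 1)) s) :
    HasSum (fun n : ℕ => (∑ k ∈ Finset.range n, a k) * b n) s := by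
  refine (hasSum_nat_add_iff' 1).mp ?_
  simp only [Finset.range_one, Finset.sum_singleton, Finset.range_zero, Finset.sum_empty,
    zero_mul, sub_zero]
  refine h.sum_range_antidiagonal.congr_fun fun n => ?_
  rw [Finset.sum_mul]
  refine Finset.sum_congr rfl fun k hk => ?_
  rw [Nat.add_sub_cancel' (Nat.lt_succ_iff.mp (Finset.mem_range.mp hk))]

theorem partial_fraction_one_div_sq_mul_one_div_sq (j k : ℕ) :
    1 / ((j : ℝ) + 1) ^ 2 * (1 / ((k : ℝ) + 1) ^ 2) =
      1 / ((j : ℝ) + 1) ^ 2 * (1 / (((j + k + 1 : ℕ) : ℝ) + 1) ^ 2)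
      + 1 / ((k : ℝ) + 1) ^ 2 * (1 / (((k + j + 1 : ℕ) : ℝ) + 1) ^ 2)
      + 2 * (1 / ((j : ℝ) + 1) * (1 / (((j + k + 1 : ℕ) : ℝ) + 1) ^ 3)
        + 1 / ((k : ℝ) + 1) * (1 / (((k + j + 1 : ℕ) : ℝ) + 1) ^ 3)) := by
  have h3 : ((j + k + 1 : ℕ) : ℝ) + 1 = (j + 1) + (k + 1) := by push_cast; ring
  rw [show k + j = j + k from add_comm k j, h3]
  have h1 : 0 < (j : ℝ) + 1 := by positivity
  have h2 : 0 < (k : ℝ) + 1 := by positivity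
  generalize (j : ℝ) + 1 = u at h1 ⊢
  generalize (k : ℝ) + 1 = v at h2 ⊢
  field_simp
  ring

/-- Euler's sum `∑ H_{n-1} / n³ = ζ(4) / 4`. -/
theorem hasSum_sum_one_div_mul_one_div_pow_three :
    HasSum (fun n : ℕ => (∑ k ∈ Finset.range n, 1 / ((k : ℝ) + 1)) * (1 / ((n : ℝ) + 1) ^ 3))
      (π ^ 4 / 360) := by
  obtain ⟨A, hA⟩ : ∃ A : ℕ × ℕ → ℝ, A = fun x =>
    1 / ((x.1 : ℝ) + 1) ^ 2 * (1 / (((x.1 + x.2 + 1 : ℕ) : ℝ) + 1) ^ 2) := ⟨_, rfl⟩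
  obtain ⟨E, hE⟩ : ∃ E : ℕ × ℕ → ℝ, E = fun x =>
    1 / ((x.1 : ℝ) + 1) * (1 / (((x.1 + x.2 + 1 : ℕ) : ℝ) + 1) ^ 3) := ⟨_, rfl⟩
  obtain ⟨C, hC⟩ : ∃ C : ℕ × ℕ → ℝ, C = fun x =>
    1 / ((x.1 : ℝ) + 1) ^ 2 * (1 / ((x.2 : ℝ) + 1) ^ 2) := ⟨_, rfl⟩
  have hCsum : HasSum C (π ^ 2 / 6 * (π ^ 2 / 6)) :=
    hC ▸ hasSum_one_div_succ_sq.mul_of_nonneg hasSum_one_div_succ_sq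
      (fun n => by positivity) (fun n => by positivity)
  have hCs : Summable C := hCsum.summable
  have hdecomp : ∀ x, C x = A x + A x.swap + 2 * (E x + E x.swap) := by
    rintro ⟨j, k⟩
    simpa only [hA, hE, hC, Prod.swap_prod_mk] using partial_fraction_one_div_sq_mul_one_div_sq j k
  have hA0 : ∀ x, 0 ≤ A x := fun x => by rw [hA]; positivity
  have hE0 : ∀ x, 0 ≤ E x := fun x => by rw [hE]; positivity
  have hAs : Summable A := hCs.of_nonneg_of_le hA0 fun x => by
    rw [hdecomp x]; linarith [hA0 x.swap, hE0 x, hE0 x.swap]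
  have hEs : Summable E := hCs.of_nonneg_of_le hE0 fun x => by
    rw [hdecomp x]; linarith [hA0 x, hA0 x.swap, hE0 x, hE0 x.swap]
  have swap : ∀ {F : ℕ × ℕ → ℝ} {a : ℝ}, HasSum F a → HasSum (fun x : ℕ × ℕ => F x.swap) a :=
    fun h => (Equiv.prodComm ℕ ℕ).hasSum_iff.mpr h
  have hAsum : ∑' x, A x = π ^ 4 / 120 := by
    have h := hAs.hasSum
    nth_rewrite 1 [hA] at h
    exact (HasSum.sum_range_mul (a := fun k => 1 / ((k : ℝ) + 1) ^ 2)
      (b := fun n => 1 / ((n : ℝ) + 1) ^ 2) h).unique hasSum_sum_one_div_sq_mul_one_div_sq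
  have hEsum : ∑' x, E x = π ^ 4 / 360 := by
    have h := (hAs.hasSum.add (swap hAs.hasSum)).add
      ((hEs.hasSum.add (swap hEs.hasSum)).mul_left 2)
    have h' := hCsum.unique (h.congr_fun hdecomp)
    rw [hAsum] at h'
    linarith
  have h := hEs.hasSum
  rw [hEsum, hE] at h
  exact HasSum.sum_range_mul (a := fun k => 1 / ((k : ℝ) + 1))
    (b := fun n => 1 / ((n : ℝ) + 1) ^ 3) h

theorem log_sq_le_rpow {x : ℝ} (h0 : 0 < x) (h1 : x ≤ 1) :
    log x ^ 2 ≤ 16 * x ^ (-(1 / 2) : ℝ) := by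
  have h := abs_log_mul_self_rpow_lt x (1 / 4) h0 h1 (by norm_num)
  have hsq : (log x * x ^ (1 / 4 : ℝ)) ^ 2 ≤ 16 := by
    rw [← sq_abs]
    nlinarith [abs_nonneg (log x * x ^ (1 / 4 : ℝ))]
  have hx : (x ^ (1 / 4 : ℝ)) ^ 2 = x ^ (1 / 2 : ℝ) := by
    rw [← rpow_natCast, ← rpow_mul h0.le]; norm_num
  rw [rpow_neg h0.le, ← div_eq_mul_inv, le_div_iff₀ (rpow_pos_of_pos h0 _), ← hx, ← mul_pow]
  exact hsq

theorem mul_one_sub_le_sin_pi_mul {x : ℝ} (h0 : 0 ≤ x) (h1 : x ≤ 1) :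
    x * (1 - x) ≤ sin (π * x) := by
  have key : ∀ y : ℝ, 0 ≤ y → y ≤ 1 / 2 → y * (1 - y) ≤ sin (π * y) := fun y hy hy' => by
    have h := mul_le_sin (x := π * y) (by positivity) (by nlinarith [pi_pos])
    have : 2 / π * (π * y) = 2 * y := by field_simp
    nlinarith
  rcases le_total x (1 / 2) with h | h
  · exact key x h0 h
  · have := key (1 - x) (by linarith) (by linarith)
    rw [show π * (1 - x) = π - π * x by ring, sin_pi_sub] at this
    linarith

theorem sin_pi_mul_pos {x : ℝ} (hx : x ∈ Set.Ioo (0 : ℝ) 1) : 0 < sin (π * x) :=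
  sin_pos_of_pos_of_lt_pi (mul_pos pi_pos hx.1) (by nlinarith [pi_pos, hx.2])

theorem log_sin_pi_mul_sq_le {x : ℝ} (hx : x ∈ Set.Ioo (0 : ℝ) 1) :
    log (sin (π * x)) ^ 2 ≤ 32 * (x ^ (-(1 / 2) : ℝ) + (1 - x) ^ (-(1 / 2) : ℝ)) := by
  obtain ⟨h0, h1⟩ := hx
  have h1' : 0 < 1 - x := by linarith
  have hle : log x + log (1 - x) ≤ log (sin (π * x)) := by
    rw [← log_mul h0.ne' h1'.ne']
    exact log_le_log (mul_pos h0 h1') (mul_one_sub_le_sin_pi_mul h0.le h1.le)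
  have hneg : log (sin (π * x)) ≤ 0 :=
    log_nonpos (sin_pi_mul_pos ⟨h0, h1⟩).le (sin_le_one _)
  have ha := log_sq_le_rpow h0 h1.le
  have hb := log_sq_le_rpow h1' (by linarith)
  nlinarith [sq_nonneg (log x - log (1 - x))]

theorem aestronglyMeasurable_log_sin_pi_mul {μ : MeasureTheory.Measure ℝ} :
    MeasureTheory.AEStronglyMeasurable (fun x : ℝ => log (sin (π * x))) μ :=
  (measurable_log.comp (by fun_prop)).aestronglyMeasurable

theorem intervalIntegrable_log_sin_pi_mul_sq :
    IntervalIntegrable (fun x : ℝ => log (sin (π * x)) ^ 2) MeasureTheory.volume 0 1 := by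
  have hg : IntervalIntegrable (fun x : ℝ => x ^ (-(1 / 2) : ℝ)) MeasureTheory.volume 0 1 :=
    intervalIntegral.intervalIntegrable_rpow' (by norm_num)
  have hg' : IntervalIntegrable (fun x : ℝ => (1 - x) ^ (-(1 / 2) : ℝ))
      MeasureTheory.volume 0 1 := by
    simpa using (hg.comp_sub_left 1).symm
  refine ((hg.add hg').const_mul 32).mono_fun
    (aestronglyMeasurable_log_sin_pi_mul.pow 2) ?_
  rw [Set.uIoc_of_le zero_le_one, ← MeasureTheory.restrict_Ioo_eq_restrict_Ioc]
  filter_upwards [MeasureTheory.ae_restrict_mem measurableSet_Ioo] with x hx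
  rw [norm_of_nonneg (sq_nonneg _)]
  exact (log_sin_pi_mul_sq_le hx).trans (le_abs_self _)

theorem memLp_two_log_sin_pi_mul :
    MeasureTheory.MemLp (fun x : ℝ => log (sin (π * x))) 2
      (MeasureTheory.volume.restrict (Set.Ioc 0 1)) := by
  rw [MeasureTheory.memLp_two_iff_integrable_sq aestronglyMeasurable_log_sin_pi_mul]
  exact (intervalIntegrable_iff_integrableOn_Ioc_of_le zero_le_one).mp
    intervalIntegrable_log_sin_pi_mul_sq

theorem intervalIntegrable_log_sin_pi_mul :
    IntervalIntegrable (fun x : ℝ => log (sin (π * x))) MeasureTheory.volume 0 1 :=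
  (intervalIntegrable_iff_integrableOn_Ioc_of_le zero_le_one).mpr
    (memLp_two_log_sin_pi_mul.integrable (by norm_num))

theorem integral_log_sin_pi_mul : ∫ x in (0 : ℝ)..1, log (sin (π * x)) = -log 2 := by
  rw [intervalIntegral.integral_comp_mul_left (fun x => log (sin x)) pi_ne_zero]
  simp only [mul_zero, mul_one, integral_log_sin_zero_pi, smul_eq_mul]
  field_simp

theorem exists_continuous_sin_nat_mul (n : ℕ) :
    ∃ g : ℝ → ℝ, Continuous g ∧ ∀ t, sin (n * t) = sin t * g t := by
  induction n with
  | zero => exact ⟨fun _ => 0, continuous_const, fun t => by simp⟩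
  | succ n ih =>
    obtain ⟨g, hg, h⟩ := ih
    refine ⟨fun t => g t * cos t + cos (n * t), by fun_prop, fun t => ?_⟩
    rw [Nat.cast_succ, add_mul, one_mul, sin_add, h]
    ring

theorem continuousOn_mul_log_sq : ContinuousOn (fun s : ℝ => s * log s ^ 2) (Set.Ici 0) := by
  have h : Continuous fun s : ℝ => 4 * (√s * log √s) ^ 2 := by
    have := continuous_mul_log.comp continuous_sqrt
    exact continuous_const.mul (this.pow 2)
  refine h.continuousOn.congr fun s hs => ?_
  have hs' : (0 : ℝ) ≤ s := hs
  simp only [log_sqrt hs', mul_pow, sq_sqrt hs']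
  ring

/-- The modified Dirichlet kernel: a trigonometric polynomial which equals
`cot (πx) sin (2π(n + 1)x)` wherever `sin (πx) ≠ 0`. -/
noncomputable def modifiedDirichletKernel (n : ℕ) (x : ℝ) : ℝ :=
  1 + 2 * ∑ k ∈ Finset.range n, cos (2 * π * (k + 1 : ℕ) * x) + cos (2 * π * (n + 1 : ℕ) * x)

theorem sin_mul_modifiedDirichletKernel (n : ℕ) (x : ℝ) :
    sin (π * x) * modifiedDirichletKernel n x
      = cos (π * x) * sin (2 * π * (n + 1 : ℕ) * x) := by
  induction n with
  | zero =>
    have h : 2 * π * ((0 + 1 : ℕ) : ℝ) * x = 2 * (π * x) := by push_cast; ring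
    simp only [modifiedDirichletKernel, Finset.range_zero, Finset.sum_empty]
    rw [h, cos_two_mul, sin_two_mul]
    ring
  | succ n ih =>
    have e : modifiedDirichletKernel (n + 1) x = modifiedDirichletKernel n x
        + cos (2 * π * (n + 1 : ℕ) * x) + cos (2 * π * (n + 1 + 1 : ℕ) * x) := by
      simp only [modifiedDirichletKernel, Finset.sum_range_succ]
      ring
    have h : 2 * π * ((n + 1 + 1 : ℕ) : ℝ) * x
        = 2 * π * ((n + 1 : ℕ) : ℝ) * x + 2 * (π * x) := by push_cast; ring
    rw [e, mul_add, mul_add, ih, h, cos_add, sin_add, cos_two_mul, sin_two_mul]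
    have := sin_sq_add_cos_sq (π * x)
    linear_combination (-2 * cos (π * x) * sin (2 * π * ((n + 1 : ℕ) : ℝ) * x)) * this

theorem continuous_modifiedDirichletKernel (n : ℕ) : Continuous (modifiedDirichletKernel n) := by
  unfold modifiedDirichletKernel
  fun_prop

theorem integral_cos_two_pi_mul (n : ℕ) :
    ∫ x in (0 : ℝ)..1, cos (2 * π * (n + 1 : ℕ) * x) = 0 := by
  have h : 2 * π * ((n + 1 : ℕ) : ℝ) ≠ 0 := by positivity
  rw [intervalIntegral.integral_comp_mul_left cos h, integral_cos,
    show 2 * π * ((n + 1 : ℕ) : ℝ) * 1 = ((2 * (n + 1) : ℕ) : ℝ) * π by push_cast; ring,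
    sin_nat_mul_pi]
  simp

theorem integral_mul_modifiedDirichletKernel {f : ℝ → ℝ}
    (hf : IntervalIntegrable f MeasureTheory.volume 0 1) (n : ℕ) :
    ∫ x in (0 : ℝ)..1, f x * modifiedDirichletKernel n x =
      (∫ x in (0 : ℝ)..1, f x)
        + 2 * ∑ k ∈ Finset.range n, (∫ x in (0 : ℝ)..1, f x * cos (2 * π * (k + 1 : ℕ) * x))
        + ∫ x in (0 : ℝ)..1, f x * cos (2 * π * (n + 1 : ℕ) * x) := by
  have hi : ∀ k : ℕ, IntervalIntegrable (fun x => f x * cos (2 * π * (k + 1 : ℕ) * x))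
      MeasureTheory.volume 0 1 := fun k => hf.mul_continuousOn (by fun_prop)
  have hs : IntervalIntegrable
      (fun x => 2 * ∑ k ∈ Finset.range n, f x * cos (2 * π * (k + 1 : ℕ) * x))
      MeasureTheory.volume 0 1 := by
    have := (IntervalIntegrable.sum (Finset.range n) fun k _ => hi k).const_mul 2
    simpa only [Finset.sum_apply] using this
  rw [← intervalIntegral.integral_finsetSum fun k _ => hi k,
    ← intervalIntegral.integral_const_mul, ← intervalIntegral.integral_add hf hs,
    ← intervalIntegral.integral_add (hf.add hs) (hi n)]
  congr 1
  ext x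
  rw [modifiedDirichletKernel, ← Finset.mul_sum]
  ring

theorem integral_modifiedDirichletKernel (n : ℕ) :
    ∫ x in (0 : ℝ)..1, modifiedDirichletKernel n x = 1 := by
  have h := integral_mul_modifiedDirichletKernel (f := fun _ => 1) (by simp) n
  simp only [one_mul, integral_cos_two_pi_mul] at h
  simpa using h

theorem hasDerivAt_log_sin_pi_mul {x : ℝ} (hx : x ∈ Set.Ioo (0 : ℝ) 1) :
    HasDerivAt (fun x => log (sin (π * x))) (π * cos (π * x) / sin (π * x)) x := by
  have h := (((hasDerivAt_id x).const_mul π).sin).log (sin_pi_mul_pos hx).ne'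
  exact h.congr_deriv (by simp [mul_comm])

theorem hasDerivAt_sin_two_pi_mul (n : ℕ) (x : ℝ) :
    HasDerivAt (fun x => sin (2 * π * (n + 1 : ℕ) * x))
      (2 * π * (n + 1 : ℕ) * cos (2 * π * (n + 1 : ℕ) * x)) x := by
  have h := ((hasDerivAt_id x).const_mul (2 * π * ((n + 1 : ℕ) : ℝ))).sin
  exact h.congr_deriv (by simp [mul_comm])

theorem exists_continuous_sin_two_pi_mul (n : ℕ) :
    ∃ g : ℝ → ℝ, Continuous g ∧ ∀ x, sin (2 * π * (n + 1 : ℕ) * x) = sin (π * x) * g x := by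
  obtain ⟨g, hg, h⟩ := exists_continuous_sin_nat_mul (2 * (n + 1))
  refine ⟨fun x => g (π * x), by fun_prop, fun x => ?_⟩
  rw [← h]
  push_cast
  ring_nf

/-- The Fourier cosine coefficients of `log (sin (πx))`. -/
theorem integral_log_sin_pi_mul_mul_cos (n : ℕ) :
    ∫ x in (0 : ℝ)..1, log (sin (π * x)) * cos (2 * π * (n + 1 : ℕ) * x)
      = -(1 / (2 * (n + 1))) := by
  obtain ⟨g, hg, hsg⟩ := exists_continuous_sin_two_pi_mul n
  have hi : IntervalIntegrable
      (fun x => 2 * π * (n + 1 : ℕ) * (log (sin (π * x)) * cos (2 * π * (n + 1 : ℕ) * x)))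
      MeasureTheory.volume 0 1 :=
    (intervalIntegrable_log_sin_pi_mul.mul_continuousOn (by fun_prop)).const_mul _
  have hK : IntervalIntegrable (fun x => π * modifiedDirichletKernel n x)
      MeasureTheory.volume 0 1 :=
    ((continuous_modifiedDirichletKernel n).const_mul π).intervalIntegrable _ _
  have h := intervalIntegral.integral_eq_sub_of_hasDerivAt_of_le zero_le_one
    (f := fun x => log (sin (π * x)) * sin (2 * π * (n + 1 : ℕ) * x))
    (f' := fun x => π * modifiedDirichletKernel n x
      + 2 * π * (n + 1 : ℕ) * (log (sin (π * x)) * cos (2 * π * (n + 1 : ℕ) * x))) ?_ ?_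
    (hK.add hi)
  · rw [intervalIntegral.integral_add hK hi, intervalIntegral.integral_const_mul,
      intervalIntegral.integral_const_mul, integral_modifiedDirichletKernel] at h
    simp only [mul_one, sin_pi, mul_zero, sin_zero, log_zero, zero_mul, sub_zero] at h
    push_cast at h ⊢
    have hn : (n : ℝ) + 1 ≠ 0 := by positivity
    rw [eq_comm, neg_eq_iff_eq_neg, div_eq_iff (by positivity)]
    refine mul_left_cancel₀ pi_ne_zero ?_
    linear_combination h
  · have : Continuous fun x => (sin (π * x) * log (sin (π * x))) * g x :=
      (continuous_mul_log.comp (by fun_prop : Continuous fun x => sin (π * x))).mul hg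
    refine this.continuousOn.congr fun x _ => ?_
    simp only [hsg]
    ring
  · intro x hx
    refine ((hasDerivAt_log_sin_pi_mul hx).mul (hasDerivAt_sin_two_pi_mul n x)).congr_deriv ?_
    have hs := (sin_pi_mul_pos hx).ne'
    have hker : modifiedDirichletKernel n x
        = cos (π * x) * sin (2 * π * (n + 1 : ℕ) * x) / sin (π * x) := by
      rw [eq_div_iff hs, mul_comm, sin_mul_modifiedDirichletKernel]
    rw [hker]
    ring

/-- The Fourier cosine coefficients of `log² (sin (πx))`. -/
theorem integral_log_sin_pi_mul_sq_mul_cos (n : ℕ) :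
    ∫ x in (0 : ℝ)..1, log (sin (π * x)) ^ 2 * cos (2 * π * (n + 1 : ℕ) * x)
      = (log 2 + ∑ k ∈ Finset.range n, 1 / ((k : ℝ) + 1) + 1 / (2 * (n + 1))) / (n + 1) := by
  obtain ⟨g, hg, hsg⟩ := exists_continuous_sin_two_pi_mul n
  have hi : IntervalIntegrable
      (fun x => 2 * π * (n + 1 : ℕ) * (log (sin (π * x)) ^ 2 * cos (2 * π * (n + 1 : ℕ) * x)))
      MeasureTheory.volume 0 1 :=
    (intervalIntegrable_log_sin_pi_mul_sq.mul_continuousOn (by fun_prop)).const_mul _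
  have hK : IntervalIntegrable
      (fun x => 2 * π * (log (sin (π * x)) * modifiedDirichletKernel n x))
      MeasureTheory.volume 0 1 :=
    (intervalIntegrable_log_sin_pi_mul.mul_continuousOn
      (continuous_modifiedDirichletKernel n).continuousOn).const_mul _
  have h := intervalIntegral.integral_eq_sub_of_hasDerivAt_of_le zero_le_one
    (f := fun x => log (sin (π * x)) ^ 2 * sin (2 * π * (n + 1 : ℕ) * x))
    (f' := fun x => 2 * π * (log (sin (π * x)) * modifiedDirichletKernel n x)
      + 2 * π * (n + 1 : ℕ) * (log (sin (π * x)) ^ 2 * cos (2 * π * (n + 1 : ℕ) * x))) ?_ ?_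
    (hK.add hi)
  · rw [intervalIntegral.integral_add hK hi, intervalIntegral.integral_const_mul,
      intervalIntegral.integral_const_mul,
      integral_mul_modifiedDirichletKernel intervalIntegrable_log_sin_pi_mul,
      integral_log_sin_pi_mul] at h
    simp only [integral_log_sin_pi_mul_mul_cos] at h
    have hsum : 2 * ∑ k ∈ Finset.range n, -(1 / (2 * ((k : ℝ) + 1)))
        = -∑ k ∈ Finset.range n, 1 / ((k : ℝ) + 1) := by
      rw [Finset.mul_sum, ← Finset.sum_neg_distrib]
      refine Finset.sum_congr rfl fun k _ => ?_
      field_simp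
    rw [hsum] at h
    simp only [mul_one, sin_pi, mul_zero, sin_zero, log_zero, sub_zero] at h
    have hn : (n : ℝ) + 1 ≠ 0 := by positivity
    rw [eq_div_iff hn]
    refine mul_left_cancel₀ two_pi_pos.ne' ?_
    push_cast at h ⊢
    linear_combination h
  · have hc : ContinuousOn (fun x => (sin (π * x) * log (sin (π * x)) ^ 2) * g x)
        (Set.Icc 0 1) := by
      refine ContinuousOn.mul (continuousOn_mul_log_sq.comp
        (by fun_prop : ContinuousOn (fun x => sin (π * x)) (Set.Icc 0 1)) fun x hx => ?_)
        hg.continuousOn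
      exact (mul_nonneg hx.1 (sub_nonneg.mpr hx.2)).trans (mul_one_sub_le_sin_pi_mul hx.1 hx.2)
    refine hc.congr fun x _ => ?_
    simp only [hsg]
    ring
  · intro x hx
    refine (((hasDerivAt_log_sin_pi_mul hx).pow 2).mul
      (hasDerivAt_sin_two_pi_mul n x)).congr_deriv ?_
    have hs := (sin_pi_mul_pos hx).ne'
    have hker : modifiedDirichletKernel n x
        = cos (π * x) * sin (2 * π * (n + 1 : ℕ) * x) / sin (π * x) := by
      rw [eq_div_iff hs, mul_comm, sin_mul_modifiedDirichletKernel]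
    rw [hker]
    simp only [Pi.pow_apply, Nat.cast_ofNat]
    ring

theorem sin_pi_mul_one_sub (x : ℝ) : sin (π * (1 - x)) = sin (π * x) := by
  rw [mul_one_sub, sin_pi_sub]

theorem integral_log_sin_pi_mul_mul_sin (n : ℤ) :
    ∫ x in (0 : ℝ)..1, log (sin (π * x)) * sin (2 * π * n * x) = 0 := by
  have h := intervalIntegral.integral_comp_sub_left (a := 0) (b := 1)
    (fun x => log (sin (π * x)) * sin (2 * π * n * x)) 1
  have hs : ∀ x : ℝ, sin (2 * π * n * (1 - x)) = -sin (2 * π * n * x) := fun x => by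
    rw [show 2 * π * n * (1 - x) = n * (2 * π) - 2 * π * n * x by ring, sin_int_mul_two_pi_sub]
  simp only [sin_pi_mul_one_sub, hs, mul_neg, intervalIntegral.integral_neg, sub_zero,
    sub_self] at h
  linarith

theorem fourierCoeffOn_log_sin_pi_mul (n : ℤ) :
    fourierCoeffOn zero_lt_one (fun x : ℝ => (log (sin (π * x)) : ℂ)) n
      = ((∫ x in (0 : ℝ)..1, log (sin (π * x)) * cos (2 * π * n * x) : ℝ) : ℂ) := by
  rw [fourierCoeffOn_eq_integral]
  have hi : ∀ g : ℝ → ℝ, Continuous g → IntervalIntegrable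
      (fun x => ((log (sin (π * x)) * g x : ℝ) : ℂ)) MeasureTheory.volume 0 1 := fun g hg =>
    have h := intervalIntegrable_log_sin_pi_mul.mul_continuousOn hg.continuousOn
    ⟨h.1.ofReal, h.2.ofReal⟩
  have hc := hi (fun x => cos (2 * π * n * x)) (by fun_prop)
  have hs := (hi (fun x => sin (2 * π * n * x)) (by fun_prop)).mul_const (-Complex.I)
  have key : ∀ x : ℝ, fourier (-n) (x : AddCircle ((1 : ℝ) - 0)) • (log (sin (π * x)) : ℂ)
      = ((log (sin (π * x)) * cos (2 * π * n * x) : ℝ) : ℂ)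
        + ((log (sin (π * x)) * sin (2 * π * n * x) : ℝ) : ℂ) * -Complex.I := fun x => by
    have he : 2 * (π : ℂ) * Complex.I * ((-n : ℤ) : ℂ) * x / ((1 - 0 : ℝ) : ℂ)
        = ((-(2 * π * n * x) : ℝ) : ℂ) * Complex.I := by push_cast; ring
    rw [fourier_coe_apply, he, Complex.exp_mul_I, ← Complex.ofReal_cos, ← Complex.ofReal_sin,
      cos_neg, sin_neg, smul_eq_mul]
    push_cast
    ring
  simp only [key]
  rw [intervalIntegral.integral_add hc hs, intervalIntegral.integral_mul_const,
    intervalIntegral.integral_ofReal, intervalIntegral.integral_ofReal,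
    integral_log_sin_pi_mul_mul_sin]
  simp

theorem integral_log_sin_pi_mul_sq :
    ∫ x in (0 : ℝ)..1, log (sin (π * x)) ^ 2 = log 2 ^ 2 + π ^ 2 / 12 := by
  have h := (hasSum_sq_fourierCoeffOn zero_lt_one memLp_two_log_sin_pi_mul.ofReal).nat_add_neg
  simp only [Complex.coe_algebraMap, fourierCoeffOn_log_sin_pi_mul,
    Complex.norm_real, norm_eq_abs, sq_abs, Int.cast_neg, Int.cast_natCast, Int.cast_zero,
    mul_neg, neg_mul, cos_neg, mul_zero, zero_mul, cos_zero, mul_one, integral_log_sin_pi_mul,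
    sub_zero, inv_one, one_smul] at h
  have h' := (hasSum_nat_add_iff' 1).mpr h
  simp only [integral_log_sin_pi_mul_mul_cos, Finset.range_one, Finset.sum_singleton,
    Nat.cast_zero, mul_zero, zero_mul, cos_zero, mul_one, integral_log_sin_pi_mul] at h'
  have h'' := h'.unique ((hasSum_one_div_succ_sq.mul_left (1 / 2)).congr_fun fun n => by
    field_simp
    ring)
  linarith

theorem hasSum_cos_div_sq {x : ℝ} (hx : x ∈ Set.Icc (0 : ℝ) 1) :
    HasSum (fun n : ℕ => 1 / ((n : ℝ) + 1) ^ 2 * cos (2 * π * (n + 1 : ℕ) * x))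
      (π ^ 2 * (x ^ 2 - x + 1 / 6)) := by
  have h := (hasSum_nat_add_iff' 1).mpr (hasSum_one_div_nat_pow_mul_cos one_ne_zero hx)
  have hB : (Polynomial.map (algebraMap ℚ ℝ) (Polynomial.bernoulli (2 * 1))).eval x
      = x ^ 2 - x + 1 / 6 := by
    simp [Polynomial.bernoulli, Finset.sum_range_succ, bernoulli_eq_bernoulli'_of_ne_one]
    ring
  rw [hB] at h
  have hval : π ^ 2 * (x ^ 2 - x + 1 / 6)
      = (-1) ^ (1 + 1) * (2 * π) ^ (2 * 1) / 2 / (2 * 1).factorial * (x ^ 2 - x + 1 / 6) -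
        ∑ i ∈ Finset.range 1, 1 / (i : ℝ) ^ (2 * 1) * cos (2 * π * i * x) := by
    simp only [Finset.sum_range_one, Nat.cast_zero, mul_one, zero_pow two_ne_zero, div_zero,
      zero_mul, Nat.factorial_two, Nat.cast_ofNat]
    ring
  rw [hval]
  exact h.congr_fun fun n => by simp

theorem integral_log_sin_pi_mul_sq_mul_id :
    ∫ x in (0 : ℝ)..1, log (sin (π * x)) ^ 2 * x
      = (1 / 2) * ∫ x in (0 : ℝ)..1, log (sin (π * x)) ^ 2 := by
  have h := intervalIntegral.integral_comp_sub_left (a := 0) (b := 1)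
    (fun x => log (sin (π * x)) ^ 2 * x) 1
  simp only [sin_pi_mul_one_sub, mul_one_sub (_ ^ 2), sub_zero, sub_self] at h
  rw [intervalIntegral.integral_sub intervalIntegrable_log_sin_pi_mul_sq
    (intervalIntegrable_log_sin_pi_mul_sq.mul_continuousOn (by fun_prop))] at h
  linarith

theorem hasSum_integral_log_sin_pi_mul_sq_mul_cos :
    HasSum (fun n : ℕ => ∫ x in (0 : ℝ)..1,
        log (sin (π * x)) ^ 2 * (1 / ((n : ℝ) + 1) ^ 2 * cos (2 * π * (n + 1 : ℕ) * x)))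
      (∫ x in (0 : ℝ)..1, log (sin (π * x)) ^ 2 * (π ^ 2 * (x ^ 2 - x + 1 / 6))) := by
  refine intervalIntegral.hasSum_integral_of_dominated_convergence
    (fun n x => log (sin (π * x)) ^ 2 * (1 / ((n : ℝ) + 1) ^ 2)) (fun n => ?_) (fun n => ?_)
    ?_ ?_ ?_
  · exact (aestronglyMeasurable_log_sin_pi_mul.pow 2).mul
      (Continuous.aestronglyMeasurable (by fun_prop))
  · refine Filter.Eventually.of_forall fun x _ => ?_
    rw [norm_mul, norm_mul, norm_of_nonneg (sq_nonneg (log _)),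
      norm_of_nonneg (by positivity : 0 ≤ 1 / ((n : ℝ) + 1) ^ 2)]
    gcongr
    exact mul_le_of_le_one_right (by positivity) (abs_cos_le_one _)
  · exact Filter.Eventually.of_forall fun x _ => hasSum_one_div_succ_sq.summable.mul_left _
  · simp only [tsum_mul_left]
    exact intervalIntegrable_log_sin_pi_mul_sq.mul_const _
  · refine Filter.Eventually.of_forall fun x hx => (hasSum_cos_div_sq ?_).mul_left _
    rw [Set.uIoc_of_le zero_le_one] at hx
    exact Set.Ioc_subset_Icc_self hx

theorem hasSum_one_div_succ_pow_three :
    HasSum (fun n : ℕ => 1 / ((n : ℝ) + 1) ^ 3) (riemannZeta 3).re := by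
  have hs : Summable fun n : ℕ => 1 / (n : ℝ) ^ 3 := summable_one_div_nat_pow.mpr (by norm_num)
  have hz : riemannZeta 3 = ((∑' n : ℕ, 1 / (n : ℝ) ^ 3 : ℝ) : ℂ) := by
    have := zeta_nat_eq_tsum_of_gt_one (k := 3) (by norm_num)
    push_cast at this ⊢
    exact this
  rw [hz, Complex.ofReal_re]
  simpa using (hasSum_nat_add_iff' 1).mpr hs.hasSum

theorem integral_log_sin_pi_mul_sq_mul_bernoulli :
    ∫ x in (0 : ℝ)..1, log (sin (π * x)) ^ 2 * (π ^ 2 * (x ^ 2 - x + 1 / 6))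
      = log 2 * (riemannZeta 3).re + π ^ 4 / 120 := by
  have h := ((hasSum_one_div_succ_pow_three.mul_left (log 2)).add
    hasSum_sum_one_div_mul_one_div_pow_three).add
    (hasSum_one_div_succ_pow_four.mul_left (1 / 2))
  have h' := hasSum_integral_log_sin_pi_mul_sq_mul_cos.unique (h.congr_fun fun n => ?_)
  · rw [h']
    ring
  · simp only [mul_left_comm _ (1 / ((n : ℝ) + 1) ^ 2)]
    rw [intervalIntegral.integral_const_mul, integral_log_sin_pi_mul_sq_mul_cos]
    field_simp

/-- `∫₀¹ x²·log²(sin(πx)) dx = 13π²/360 + (1/3)·log²2 + (1/π²)·(log 2)·ζ(3)`. -/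
theorem integral_xsq_logsq_sin :
    ∫ x in (0:ℝ)..1, x ^ 2 * Real.log (Real.sin (π * x)) ^ 2 =
      13 * π ^ 2 / 360 + (1 / 3) * Real.log 2 ^ 2
        + (1 / π ^ 2) * Real.log 2 * (riemannZeta 3).re := by
  have hi : ∀ g : ℝ → ℝ, Continuous g → IntervalIntegrable
      (fun x => log (sin (π * x)) ^ 2 * g x) MeasureTheory.volume 0 1 :=
    fun g hg => intervalIntegrable_log_sin_pi_mul_sq.mul_continuousOn hg.continuousOn
  have hsplit : ∀ x : ℝ, x ^ 2 * log (sin (π * x)) ^ 2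
      = (1 / π ^ 2) * (log (sin (π * x)) ^ 2 * (π ^ 2 * (x ^ 2 - x + 1 / 6)))
        + log (sin (π * x)) ^ 2 * x - 1 / 6 * log (sin (π * x)) ^ 2 := fun x => by
    have := pi_ne_zero
    field_simp
    ring
  have h1 := (hi (fun x => π ^ 2 * (x ^ 2 - x + 1 / 6)) (by fun_prop)).const_mul (1 / π ^ 2)
  have h2 := hi (fun x => x) continuous_id
  simp only [hsplit]
  rw [intervalIntegral.integral_sub (h1.add h2)
      (intervalIntegrable_log_sin_pi_mul_sq.const_mul _), intervalIntegral.integral_add h1 h2,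
    intervalIntegral.integral_const_mul, intervalIntegral.integral_const_mul,
    integral_log_sin_pi_mul_sq_mul_bernoulli, integral_log_sin_pi_mul_sq_mul_id,
    integral_log_sin_pi_mul_sq]
  have := pi_ne_zero
  field_simp
  ring
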